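/- Let e ≥ 3 be odd and let f : F_q → F_p belong to the class RF with sign ε. If ε(η_0(−1))^{(e+1)/2} = 1, then the code C_f' generated by the rows of [I_{e+2} | G_2] has length p^e + e + 2, dimension e + 2, and minimum distance p^e − p^{e−1} − p^{(e−1)/2} + 1. If ε(η_0(−1))^{(e+1)/2} = −1, then C_f' has length p^e + e + 2, dimension e + 2, and minimum distance p^e − p^{e−1} − p^{(e−1)/2} + 2. In both cases, the dual (C_f')^⊥ has length p^e + e + 2, dimension p^e, and minimum distance 3. -/

import Mathlib

open scoped Classical

noncomputable section

/-- The complex primitive `p`-th root of unity `ζ_p = exp(2πi/p)`. -/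
def zetapc (p : ℕ) : ℂ := Complex.exp (2 * Real.pi * Complex.I / p)

/-- `√p* = i^{((p-1)/2)²} √p`, a square root of `p* = (-1)^{(p-1)/2} p`. -/
def sqrtpstar (p : ℕ) : ℂ := Complex.I ^ (((p - 1) / 2) ^ 2) * (Real.sqrt p : ℂ)

/-- The quadratic character of a finite field: `1` on nonzero squares, `-1` on
nonsquares, `0` at `0`. -/
def qchar (F : Type*) [MonoidWithZero F] : F → ℤ :=
  fun y => if y = 0 then 0 else if IsSquare y then 1 else -1

/-- `f : F_q → F_p` belongs to the class `RF` of weakly regular bent functions,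
with sign `ε` and dual `fstar`. -/
structure IsRF (p e : ℕ) (Fq : Type*) [Field Fq] [Fintype Fq] [Algebra (ZMod p) Fq]
    (f : Fq → ZMod p) (ε : ℤ) (fstar : Fq → ZMod p) : Prop where
  sign : ε = 1 ∨ ε = -1
  map_zero : f 0 = 0
  hom : ∃ h : ℕ, Even h ∧ 0 < h ∧ Nat.gcd (h - 1) (p - 1) = 1 ∧
    ∀ a : ZMod p, a ≠ 0 → ∀ x : Fq,
      f (algebraMap (ZMod p) Fq a * x) = a ^ h * f x
  walsh : ∀ β : Fq,
    (∑ x : Fq, zetapc p ^ (f x - Algebra.trace (ZMod p) Fq (β * x)).val)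
      = (ε : ℂ) * sqrtpstar p ^ e * zetapc p ^ (fstar β).val

/-- The dual code under the standard inner product. -/
def dualCode {ι F : Type*} [Fintype ι] [CommRing F] (C : Set (ι → F)) : Set (ι → F) :=
  {u | ∀ v ∈ C, ∑ i, u i * v i = 0}

/-- `d` is the minimum distance of the code `C`: the smallest Hamming weight of a
nonzero codeword. -/
def IsMinDist {ι F : Type*} [Fintype ι] [CommRing F] (C : Set (ι → F)) (d : ℕ) : Prop :=
  (∃ c ∈ C, c ≠ 0 ∧ hammingNorm c = d) ∧ ∀ c ∈ C, c ≠ 0 → d ≤ hammingNorm c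

/-- The code generated by the rows of the block matrix `[I_k | G]`. -/
def genCode {ι F : Type*} [Fintype ι] [CommRing F] (k : ℕ) (G : Fin k → ι → F) :
    Set ((Fin k ⊕ ι) → F) :=
  {w | ∃ v : Fin k → F, w = Sum.elim v fun d => ∑ j, v j * G j d}

/-!
Once the sign of the quadratic Gauss sum is known, the Walsh transform of a weakly regular bent
function `f` on an odd-dimensional space is a power of `√p*` times a Gauss sum. The only rational
relation among the `p`-th roots of unity is that their sum vanishes, so the transform determines
every fibre size of `f - φ`, `φ` a linear form, and with it the weight of each word
`a + b (f + 1) + φ`: for `b ≠ 0` it deviates from `p ^ e - p ^ (e - 1)` by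
`- ε η₀(-1) ^ ((e + 1) / 2) p ^ ((e - 1) / 2)` times a value of `η₀`.

The identity block adds the weight of the message. The smallest weight needs that value of `η₀` to
be `1` or `-1`, according to the sign. The message of `f + 1` has weight one and gives the value
`η₀(1) = 1`, because `f` is even and hence its dual vanishes at `0`; the value `-1` costs a second
nonzero entry. The dual code has minimum distance three because the columns of the generator matrix
`G₂` are pairwise independent, of weight at least two, with weight exactly two at `x = 0`.

The sign of the Gauss sum is found by comparing, modulo a power of `X - 1` over `𝔽_p`, polynomials
representing the Gauss sum and its product formula.
-/

section EulerOperator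

open Polynomial Finset

/-- The Euler operator `X d/dX` on polynomials; it scales `X ^ j` by `j`, so its powers detect
both coefficients and the order of vanishing at `1`. -/
def eulerOp (R : Type*) [CommRing R] : Module.End R R[X] :=
  LinearMap.mulLeft R X ∘ₗ derivative

variable {R : Type*} [CommRing R]

lemma eulerOp_apply (Q : R[X]) : eulerOp R Q = X * derivative Q := rfl

lemma eulerOp_pow_X_pow (m j : ℕ) : (eulerOp R ^ m) (X ^ j) = (j : R) ^ m • X ^ j := by
  have eulerOp_X_pow : eulerOp R (X ^ j) = (j : R) • X ^ j := by
    rcases j with _ | j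
    · simp [eulerOp_apply]
    · simp only [eulerOp_apply, derivative_X_pow, smul_eq_C_mul, Nat.add_sub_cancel]
      ring
  induction m with
  | zero => simp
  | succ m ih =>
    rw [pow_succ', Module.End.mul_apply, ih, map_smul, eulerOp_X_pow, pow_succ, mul_smul]

lemma eval_one_eulerOp_pow_X_sub_one_pow_mul (m : ℕ) (Q : R[X]) :
    eval 1 ((eulerOp R ^ m) ((X - 1) ^ m * Q)) = m.factorial * eval 1 Q := by
  induction m generalizing Q with
  | zero => simp
  | succ m ih =>
    have eulerOp_step : eulerOp R ((X - 1) ^ (m + 1) * Q)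
        = (X - 1) ^ m * (X * (((m + 1 : ℕ) : R[X]) * Q + (X - 1) * derivative Q)) := by
      rw [eulerOp_apply, derivative_mul, derivative_pow_succ]
      simp only [C_add, derivative_sub, derivative_X, derivative_one, map_natCast, map_one]
      push_cast
      ring
    rw [pow_succ, Module.End.mul_apply, eulerOp_step, ih, Nat.factorial_succ]
    simp only [eval_mul, eval_add, eval_sub, eval_X, eval_one, eval_natCast]
    push_cast
    ring

lemma eval_one_eulerOp_pow_prod_X_pow_sub_X_pow (m : ℕ) (a b : ℕ → ℕ) :
    eval 1 ((eulerOp R ^ m) (∏ i ∈ range m, (X ^ a i - X ^ b i)))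
      = m.factorial * ∏ i ∈ range m, ((a i : R) - b i) := by
  have factor (i : ℕ) : (X ^ a i - X ^ b i : R[X])
      = (X - 1) * (∑ l ∈ range (a i), X ^ l - ∑ l ∈ range (b i), X ^ l) := by
    rw [mul_sub, mul_geom_sum, mul_geom_sum]
    ring
  simp_rw [factor]
  rw [prod_mul_distrib, prod_const, card_range, eval_one_eulerOp_pow_X_sub_one_pow_mul, eval_prod]
  simp [eval_finsetSum]

lemma X_sub_one_pow_dvd_map_of_aeval_eq_zero {p : ℕ} [Fact p.Prime] {K : Type*} [Field K]
    [CharZero K] {ζ : K} (hζ : IsPrimitiveRoot ζ p) {F : ℤ[X]}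
    (hF : aeval ζ F = 0) : (X - 1) ^ (p - 1) ∣ F.map (Int.castRingHom (ZMod p)) := by
  have hp : p.Prime := Fact.out
  have cyclotomic_dvd : cyclotomic p ℤ ∣ F := by
    rw [cyclotomic_eq_minpoly hζ hp.pos]
    exact minpoly.isIntegrallyClosed_dvd (hζ.isIntegral hp.pos) hF
  have cyclotomic_mod_p : cyclotomic p (ZMod p) = (X - 1) ^ (p - 1) := by
    simpa using cyclotomic_mul_prime_eq_pow_of_not_dvd (ZMod p) hp.not_dvd_one
  rw [← cyclotomic_mod_p, ← map_cyclotomic p (Int.castRingHom (ZMod p))]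
  exact map_dvd (mapRingHom _) cyclotomic_dvd

lemma eval_one_eulerOp_pow_map_of_aeval_eq_zero {p m : ℕ} [Fact p.Prime] (hm : m + 1 < p)
    {K : Type*} [Field K] [CharZero K] {ζ : K} (hζ : IsPrimitiveRoot ζ p)
    {F : ℤ[X]} (hF : aeval ζ F = 0) :
    eval 1 ((eulerOp (ZMod p) ^ m) (F.map (Int.castRingHom (ZMod p)))) = 0 := by
  obtain ⟨Q, hQ⟩ := X_sub_one_pow_dvd_map_of_aeval_eq_zero hζ hF
  rw [hQ, show p - 1 = m + (p - 2 - m + 1) by omega, pow_add, mul_assoc,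
    eval_one_eulerOp_pow_X_sub_one_pow_mul]
  simp

end EulerOperator

section GaussSum

open Polynomial Finset

lemma qchar_eq_quadraticChar (F : Type*) [Field F] [Fintype F] [DecidableEq F] :
    qchar F = quadraticChar F := by
  ext a
  rw [quadraticChar_apply, quadraticCharFun, qchar]
  split_ifs <;> rfl

lemma isPrimitiveRoot_zetapc (n : ℕ) [NeZero n] : IsPrimitiveRoot (zetapc n) n :=
  Complex.isPrimitiveRoot_exp n (NeZero.ne n)

lemma zetapc_pow_val {n : ℕ} [NeZero n] (j : ZMod n) : zetapc n ^ j.val = ZMod.stdAddChar j := by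
  have h := ZMod.stdAddChar_coe (N := n) (j.val : ℤ)
  rw [Int.cast_natCast, ZMod.natCast_rightInverse j] at h
  rw [h, zetapc, ← Complex.exp_nat_mul]
  congr 1
  push_cast
  ring

lemma prod_norm_one_sub_pow_eq_sqrt {ζ : ℂ} {m : ℕ} (hζ : IsPrimitiveRoot ζ (2 * m + 1)) :
    ∏ k ∈ range m, ‖1 - ζ ^ (k + 1)‖ = √(2 * m + 1 : ℕ) := by
  have norm_ζ : ‖ζ‖ = 1 := hζ.norm'_eq_one (by omega)
  have norm_reflect : ∀ k ∈ range m, ‖1 - ζ ^ (m + (m - 1 - k) + 1)‖ = ‖1 - ζ ^ (k + 1)‖ := by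
    intro k hk
    have hk' := mem_range.1 hk
    have hprod : ζ ^ (k + 1) * ζ ^ (m + (m - 1 - k) + 1) = 1 := by
      rw [← pow_add, ← hζ.pow_eq_one]
      congr 1
      omega
    calc ‖1 - ζ ^ (m + (m - 1 - k) + 1)‖
        = ‖ζ ^ (k + 1) * (1 - ζ ^ (m + (m - 1 - k) + 1))‖ := by simp [norm_ζ]
      _ = ‖1 - ζ ^ (k + 1)‖ := by rw [mul_sub, hprod, mul_one, norm_sub_rev]
  have hfull := congrArg norm hζ.prod_one_sub_pow_eq_order
  rw [norm_prod, two_mul, prod_range_add, ← prod_range_reflect (fun k => ‖1 - ζ ^ (m + k + 1)‖),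
    prod_congr rfl norm_reflect] at hfull
  rw [eq_comm, Real.sqrt_eq_iff_mul_self_eq (by positivity) (by positivity), hfull]
  norm_cast
  ring

lemma norm_one_sub_zetapc_pow {n k : ℕ} [NeZero n] (hk : k ≤ n) :
    ‖1 - zetapc n ^ k‖ = 2 * Real.sin (Real.pi * k / n) := by
  have hn : (0 : ℝ) < n := Nat.cast_pos.2 (NeZero.pos n)
  have sin_nonneg : 0 ≤ Real.sin (Real.pi * k / n) := by
    apply Real.sin_nonneg_of_nonneg_of_le_pi (by positivity)
    rw [div_le_iff₀ hn]
    gcongr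
  have zetapc_pow : zetapc n ^ k = Complex.exp (Complex.I * (2 * Real.pi * k / n : ℝ)) := by
    rw [zetapc, ← Complex.exp_nat_mul]
    push_cast
    ring_nf
  rw [zetapc_pow, norm_sub_rev, Complex.norm_exp_I_mul_ofReal_sub_one,
    show 2 * Real.pi * k / n / 2 = Real.pi * k / n by ring, Real.norm_of_nonneg (by positivity)]

lemma zetapc_half_pow_sub {m k : ℕ} (hk : k ≤ 2 * m + 1) :
    zetapc (2 * m + 1) ^ ((m + 1) * (2 * m + 1 - k)) - zetapc (2 * m + 1) ^ ((m + 1) * k)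
      = (-1) ^ (k + 1) * Complex.I * ‖1 - zetapc (2 * m + 1) ^ k‖ := by
  set θ : ℝ := Real.pi * k / (2 * m + 1 : ℕ) with hθ
  have half_pow : zetapc (2 * m + 1) ^ (m + 1)
      = -Complex.exp (Real.pi * Complex.I / (2 * m + 1 : ℕ)) := by
    rw [neg_eq_neg_one_mul, ← Complex.exp_pi_mul_I, ← Complex.exp_add, zetapc,
      ← Complex.exp_nat_mul]
    congr 1
    push_cast
    have : (2 * m + 1 : ℂ) ≠ 0 := by exact_mod_cast (2 * m).succ_ne_zero
    rw [← mul_div_assoc, ← sub_eq_iff_eq_add, ← sub_div, div_eq_iff this]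
    ring
  have pow_k : zetapc (2 * m + 1) ^ ((m + 1) * k) = (-1) ^ k * Complex.exp (θ * Complex.I) := by
    rw [pow_mul, half_pow, neg_pow, ← Complex.exp_nat_mul]
    push_cast [hθ]
    ring_nf
  have pow_sub_k : zetapc (2 * m + 1) ^ ((m + 1) * (2 * m + 1 - k))
      = (-1) ^ k * Complex.exp (-θ * Complex.I) := by
    have mul_pow_k : zetapc (2 * m + 1) ^ ((m + 1) * (2 * m + 1 - k))
        * zetapc (2 * m + 1) ^ ((m + 1) * k) = 1 := by
      rw [← pow_add, ← mul_add, Nat.sub_add_cancel hk, mul_comm (m + 1), pow_mul,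
        (isPrimitiveRoot_zetapc _).pow_eq_one, one_pow]
    rw [eq_inv_of_mul_eq_one_left mul_pow_k, pow_k, mul_inv, ← inv_pow, inv_neg, inv_one,
      ← Complex.exp_neg, neg_mul]
  rw [pow_k, pow_sub_k, norm_one_sub_zetapc_pow hk]
  rw [← hθ, Complex.ofReal_mul, Complex.ofReal_ofNat, Complex.ofReal_sin, Complex.two_sin]
  linear_combination (-1) ^ k * (Complex.exp (-θ * Complex.I) - Complex.exp (θ * Complex.I)) *
    Complex.I_sq

lemma prod_neg_one_pow_mul_I (m : ℕ) :
    ∏ i ∈ range m, ((-1) ^ (i + 1 + 1) * Complex.I) = Complex.I ^ m ^ 2 := by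
  induction m with
  | zero => simp
  | succ m ih =>
    rw [prod_range_succ, ih, show (m + 1) ^ 2 = m ^ 2 + (2 * m + 1) by ring, pow_add _ (m ^ 2),
      pow_succ Complex.I, pow_mul, Complex.I_sq]
    ring

/-- The product `∏_{0 < k ≤ m} (X ^ (-k / 2) - X ^ (k / 2))`, with exponents halved modulo
`2 m + 1` to make it a polynomial. It is Gauss's product formula for the quadratic Gauss sum,
and can be evaluated both at `exp (2πi / (2 m + 1))` and modulo a high power of `X - 1`. -/
def halfDiffProd (m : ℕ) : ℤ[X] :=
  ∏ i ∈ range m, (X ^ ((m + 1) * (2 * m + 1 - (i + 1))) - X ^ ((m + 1) * (i + 1)))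

lemma aeval_zetapc_halfDiffProd (m : ℕ) :
    aeval (zetapc (2 * m + 1)) (halfDiffProd m) = sqrtpstar (2 * m + 1) := by
  have factor : ∀ i ∈ range m,
      aeval (zetapc (2 * m + 1))
          (X ^ ((m + 1) * (2 * m + 1 - (i + 1))) - X ^ ((m + 1) * (i + 1)) : ℤ[X])
        = (-1) ^ (i + 1 + 1) * Complex.I * ‖1 - zetapc (2 * m + 1) ^ (i + 1)‖ := by
    intro i hi
    simp only [map_sub, map_pow, aeval_X]
    exact zetapc_half_pow_sub (by linarith [mem_range.1 hi])
  rw [halfDiffProd, map_prod, prod_congr rfl factor, prod_mul_distrib, prod_neg_one_pow_mul_I,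
    ← Complex.ofReal_prod, prod_norm_one_sub_pow_eq_sqrt (isPrimitiveRoot_zetapc _), sqrtpstar,
    show (2 * m + 1 - 1) / 2 = m by omega]

lemma ringChar_zmod_ne_two {n : ℕ} (hn : Odd n) : ringChar (ZMod n) ≠ 2 := by
  rw [ZMod.ringChar_zmod_n]
  rintro rfl
  exact absurd hn (by decide)

lemma sqrtpstar_sq {p : ℕ} [Fact p.Prime] (hp : Odd p) :
    sqrtpstar p ^ 2 = qchar (ZMod p) (-1) * p := by
  obtain ⟨m, rfl⟩ := hp
  have hchar := ringChar_zmod_ne_two ⟨m, rfl⟩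
  have neg_one_pow_sq : (-1 : ℂ) ^ m ^ 2 = (-1) ^ m := by
    rcases Nat.even_or_odd m with h | h
    · rw [h.neg_one_pow, (h.pow_of_ne_zero two_ne_zero).neg_one_pow]
    · rw [h.neg_one_pow, h.pow.neg_one_pow]
  rw [sqrtpstar, qchar_eq_quadraticChar, quadraticChar_neg_one hchar, ZMod.card,
    ZMod.χ₄_eq_neg_one_pow (by omega), show (2 * m + 1 - 1) / 2 = m by omega,
    show (2 * m + 1) / 2 = m by omega, mul_pow, ← Complex.ofReal_pow,
    Real.sq_sqrt (Nat.cast_nonneg _), ← pow_mul, mul_comm (m ^ 2), pow_mul, Complex.I_sq,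
    neg_one_pow_sq]
  simp

/-- The quadratic Gauss sum modulo `p` as a polynomial in the `p`-th root of unity. -/
def gaussPoly (p : ℕ) [Fact p.Prime] : ℤ[X] :=
  ∑ j : ZMod p, C (quadraticChar (ZMod p) j) * X ^ j.val

/-- The complex-valued quadratic character modulo `p`. -/
abbrev complexQuadraticChar (p : ℕ) [Fact p.Prime] : MulChar (ZMod p) ℂ :=
  (quadraticChar (ZMod p)).ringHomComp (Int.castRingHom ℂ)

lemma aeval_zetapc_gaussPoly (p : ℕ) [Fact p.Prime] :
    aeval (zetapc p) (gaussPoly p) = gaussSum (complexQuadraticChar p) ZMod.stdAddChar := by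
  simp [gaussPoly, gaussSum, zetapc_pow_val]

lemma neg_one_pow_mul_factorial_sq {p m : ℕ} [Fact p.Prime] (hp : p = 2 * m + 1) :
    (-1) ^ m * (m.factorial : ZMod p) ^ 2 = -1 := by
  have reflect : ∏ i ∈ range m, ((m + i + 1 : ℕ) : ZMod p) = (-1) ^ m * m.factorial := by
    calc ∏ i ∈ range m, ((m + i + 1 : ℕ) : ZMod p)
        = ∏ i ∈ range m, -1 * ((i + 1 : ℕ) : ZMod p) := by
          rw [← prod_range_reflect]
          refine prod_congr rfl fun i hi => ?_
          rw [neg_one_mul, eq_neg_iff_add_eq_zero, ← Nat.cast_add, CharP.cast_eq_zero_iff _ p]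
          have := mem_range.1 hi
          exact ⟨1, by omega⟩
      _ = (-1) ^ m * m.factorial := by
          rw [prod_mul_distrib, prod_const, card_range, ← Nat.cast_prod,
            prod_range_add_one_eq_factorial]
  have wilson := ZMod.wilsons_lemma p
  rw [show p - 1 = m + m by omega, ← prod_range_add_one_eq_factorial, prod_range_add,
    prod_range_add_one_eq_factorial, Nat.cast_mul, Nat.cast_prod, reflect] at wilson
  linear_combination wilson

section Prime

variable {m : ℕ} [Fact (2 * m + 1).Prime]

lemma eval_one_eulerOp_pow_halfDiffProd :
    eval 1 ((eulerOp (ZMod (2 * m + 1)) ^ m)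
      ((halfDiffProd m).map (Int.castRingHom (ZMod (2 * m + 1))))) = -1 := by
  have exponent_sub : ∀ i ∈ range m, (((m + 1) * (2 * m + 1 - (i + 1)) : ℕ) : ZMod (2 * m + 1))
      - ((m + 1) * (i + 1) : ℕ) = -1 * (i + 1 : ℕ) := by
    intro i hi
    have two_mul_add_one : (2 * m + 1 : ZMod (2 * m + 1)) = 0 := by
      exact_mod_cast ZMod.natCast_self (2 * m + 1)
    rw [Nat.cast_mul, Nat.cast_sub (by linarith [mem_range.1 hi])]
    push_cast
    linear_combination ((m : ZMod (2 * m + 1)) + 1 - (i + 1)) * two_mul_add_one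
  simp only [halfDiffProd, Polynomial.map_prod, Polynomial.map_sub, Polynomial.map_pow, map_X]
  rw [eval_one_eulerOp_pow_prod_X_pow_sub_X_pow, prod_congr rfl exponent_sub, prod_mul_distrib,
    prod_const, card_range, ← Nat.cast_prod, prod_range_add_one_eq_factorial]
  linear_combination neg_one_pow_mul_factorial_sq (p := 2 * m + 1) rfl

lemma eval_one_eulerOp_pow_gaussPoly (hm : m ≠ 0) :
    eval 1 ((eulerOp (ZMod (2 * m + 1)) ^ m)
      ((gaussPoly (2 * m + 1)).map (Int.castRingHom (ZMod (2 * m + 1))))) = -1 := by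
  have hchar := ringChar_zmod_ne_two ⟨m, rfl⟩
  have euler_criterion (j : ZMod (2 * m + 1)) :
      (quadraticChar (ZMod (2 * m + 1)) j : ZMod (2 * m + 1)) * j ^ m = if j = 0 then 0 else 1 := by
    rw [quadraticChar_eq_pow_of_char_ne_two' hchar, ZMod.card,
      show (2 * m + 1) / 2 = m by omega, ← pow_add]
    split_ifs with hj
    · rw [hj, zero_pow (by omega)]
    · exact ZMod.pow_card_sub_one_eq_one hj ▸ congrArg _ (by omega)
  have monomial_term (j : ZMod (2 * m + 1)) :
      eval 1 ((eulerOp (ZMod (2 * m + 1)) ^ m) ((C (quadraticChar (ZMod (2 * m + 1)) j)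
        * X ^ j.val).map (Int.castRingHom (ZMod (2 * m + 1))))) = if j = 0 then 0 else 1 := by
    rw [← euler_criterion, Polynomial.map_mul, map_C, ← smul_eq_C_mul, Polynomial.map_pow, map_X,
      map_smul, eulerOp_pow_X_pow]
    simp
  have natCast_pred : ((2 * m : ℕ) : ZMod (2 * m + 1)) = -1 := by
    rw [eq_neg_iff_add_eq_zero, ← Nat.cast_succ, ZMod.natCast_self]
  rw [gaussPoly, Polynomial.map_sum, map_sum, eval_finsetSum,
    sum_congr rfl fun j _ => monomial_term j, sum_ite, sum_const_zero, zero_add, sum_const,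
    filter_ne', card_erase_of_mem (mem_univ _), card_univ, ZMod.card, nsmul_one]
  exact natCast_pred

end Prime

lemma gaussSum_quadraticChar_eq_sqrtpstar {p : ℕ} [Fact p.Prime] (hp : Odd p) :
    gaussSum (complexQuadraticChar p) ZMod.stdAddChar = sqrtpstar p := by
  obtain ⟨m, rfl⟩ := hp
  have hm : m ≠ 0 := by
    rintro rfl
    exact Nat.not_prime_one Fact.out
  have hchar := ringChar_zmod_ne_two ⟨m, rfl⟩
  have hχ : complexQuadraticChar (2 * m + 1) ≠ 1 := by
    rw [Ne, MulChar.ringHomComp_eq_one_iff (RingHom.injective_int _)]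
    exact quadraticChar_ne_one hchar
  have sq_eq : gaussSum (complexQuadraticChar (2 * m + 1)) ZMod.stdAddChar ^ 2
      = sqrtpstar (2 * m + 1) ^ 2 := by
    rw [gaussSum_sq hχ ((quadraticChar_isQuadratic _).comp _)
      (ZMod.isPrimitive_stdAddChar _), sqrtpstar_sq ⟨m, rfl⟩, qchar_eq_quadraticChar, ZMod.card]
    simp
  refine (sq_eq_sq_iff_eq_or_eq_neg.1 sq_eq).resolve_right fun eq_neg => ?_
  have aeval_eq_zero : aeval (zetapc (2 * m + 1)) (gaussPoly (2 * m + 1) + halfDiffProd m) = 0 := by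
    rw [map_add, aeval_zetapc_gaussPoly, aeval_zetapc_halfDiffProd, eq_neg, neg_add_cancel]
  have neg_two_eq_zero := eval_one_eulerOp_pow_map_of_aeval_eq_zero (m := m) (by omega)
    (isPrimitiveRoot_zetapc (2 * m + 1)) aeval_eq_zero
  rw [Polynomial.map_add, map_add, eval_add, eval_one_eulerOp_pow_gaussPoly hm,
    eval_one_eulerOp_pow_halfDiffProd] at neg_two_eq_zero
  exact Ring.two_ne_zero hchar (by linear_combination -neg_two_eq_zero)

end GaussSum

section HammingNorm

variable {α γ F : Type*} [Fintype α] [Fintype γ] [Zero F] [DecidableEq F]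

lemma hammingNorm_add_card_zeros (c : α → F) :
    hammingNorm c + (Finset.univ.filter fun x => c x = 0).card = Fintype.card α := by
  rw [hammingNorm, add_comm, Finset.card_filter_add_card_filter_not, Finset.card_univ]

lemma hammingNorm_sumElim (u : α → F) (v : γ → F) :
    hammingNorm (Sum.elim u v) = hammingNorm u + hammingNorm v := by
  simp_rw [hammingNorm, Finset.card_filter, Fintype.sum_sum_type]
  rfl

lemma hammingNorm_cons {n : ℕ} (a : F) (v : Fin n → F) :
    hammingNorm (Fin.cons a v : Fin (n + 1) → F) = (if a = 0 then 0 else 1) + hammingNorm v := by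
  simp [hammingNorm, Finset.card_filter, Fin.sum_univ_succ]

end HammingNorm

section BentFunction

open Finset Module

lemma eq_of_sum_mul_stdAddChar_eq {p : ℕ} [Fact p.Prime] {a b : ZMod p → ℤ}
    (hsum : ∑ j, a j = ∑ j, b j)
    (hchar : ∑ j, (a j : ℂ) * ZMod.stdAddChar j = ∑ j, (b j : ℂ) * ZMod.stdAddChar j) : a = b := by
  have hp : p.Prime := Fact.out
  obtain ⟨e, he⟩ : ∃ e : Fin p ≃ ZMod p, ∀ i, (e i).val = i.val := by
    obtain ⟨n, rfl⟩ := Nat.exists_eq_succ_of_ne_zero hp.ne_zero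
    exact ⟨Equiv.refl _, fun _ => rfl⟩
  have char_sum_eq_zero : ∑ i : Fin p, ((a (e i) - b (e i) : ℤ) : ℂ) * zetapc p ^ i.val = 0 := by
    simp_rw [← he, zetapc_pow_val]
    rw [e.sum_comp fun j => ((a j - b j : ℤ) : ℂ) * ZMod.stdAddChar j]
    simp only [Int.cast_sub, sub_mul, sum_sub_distrib, hchar, sub_self]
  have const := ((isPrimitiveRoot_zetapc p).sum_eq_zero_iff_forall_eq_int hp _).1 char_sum_eq_zero
  have sub_const (i j : ZMod p) : a i - b i = a j - b j := by
    simpa using const (e.symm i) (e.symm j)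
  funext j
  have : (p : ℤ) * (a j - b j) = 0 := by
    calc (p : ℤ) * (a j - b j) = ∑ i, (a i - b i) := by
          rw [sum_congr rfl fun i _ => sub_const i j]
          simp [mul_sub]
      _ = 0 := by rw [sum_sub_distrib, hsum, sub_self]
  exact sub_eq_zero.1 ((mul_eq_zero.1 this).resolve_left (by exact_mod_cast hp.ne_zero))

lemma sum_quadraticChar_sub_mul_stdAddChar {p : ℕ} [Fact p.Prime] (hp : Odd p) (d : ZMod p) :
    ∑ c, (quadraticChar (ZMod p) (c - d) : ℂ) * ZMod.stdAddChar c
      = sqrtpstar p * ZMod.stdAddChar d := by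
  rw [← gaussSum_quadraticChar_eq_sqrtpstar hp, gaussSum, sum_mul,
    ← Equiv.sum_comp (Equiv.addRight d)]
  simp only [Equiv.coe_addRight, add_sub_cancel_right, AddChar.map_add_eq_mul, mul_assoc,
    MulChar.ringHomComp_apply, eq_intCast]

lemma card_dual_fiber_mul_card {K V : Type*} [Field K] [Fintype K] [DecidableEq K] [AddCommGroup V]
    [Module K V] [Fintype V] {φ : Dual K V} (hφ : φ ≠ 0) (c : K) :
    #{x | φ x = c} * Fintype.card K = Fintype.card V := by
  have surj := LinearMap.surjective hφ
  have fiber_eq (d : K) : #{x | φ x = d} = #{x | φ x = c} :=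
    AddMonoidHom.card_fiber_eq_of_mem_range φ (surj d) (surj c)
  calc #{x | φ x = c} * Fintype.card K = ∑ d, #{x | φ x = d} := by simp [fiber_eq, mul_comm]
    _ = Fintype.card V := (card_eq_sum_card_fiberwise (by simp)).symm

lemma even_card_fiber_of_even {V α : Type*} [AddCommGroup V] [Fintype V] [DecidableEq α]
    (hV : Odd (Fintype.card V)) {f : V → α} (hf : ∀ x, f (-x) = f x) {c : α} (hc : f 0 ≠ c) :
    Even #{x | f x = c} := by
  have neg_ne_self {x : V} (hx : f x = c) : -x ≠ x := by
    intro h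
    have dvd_two : addOrderOf x ∣ 2 := addOrderOf_dvd_of_nsmul_eq_zero <| by
      rw [two_nsmul, neg_eq_iff_add_eq_zero.1 h]
    have x_eq_zero : x = 0 := AddMonoid.addOrderOf_eq_one_iff.1 <|
      Nat.eq_one_of_dvd_coprimes hV.coprime_two_left dvd_two (addOrderOf_dvd_card)
    exact hc (x_eq_zero ▸ hx)
  rw [← ZMod.natCast_eq_zero_iff_even, card_eq_sum_ones, Nat.cast_sum]
  refine sum_involution (fun x _ => -x) (fun _ _ => by decide) (fun x hx _ => ?_) (fun x hx => ?_)
    (fun x _ => neg_neg x)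
  · exact neg_ne_self (mem_filter.1 hx).2
  · simpa [hf] using hx

variable {p : ℕ} [Fact p.Prime] {V : Type*} [AddCommGroup V] [Module (ZMod p) V] [Fintype V]

/-- `f` is a weakly regular bent function on the `𝔽_p`-space `V`, of type `ε` and with dual `g`:
its Walsh transform at the linear form `φ` is `ε (√p*) ^ (dim V) ζ_p ^ (g φ)`. Indexing the
transform by linear forms rather than by elements of `V` avoids choosing an inner product.
The requirement `ε = ±1` is left out, since Parseval's identity implies it. -/
def IsWeaklyRegularBent (f : V → ZMod p) (ε : ℤ) (g : Dual (ZMod p) V → ZMod p) : Prop :=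
  ∀ φ : Dual (ZMod p) V, ∑ x, (ZMod.stdAddChar (f x - φ x) : ℂ)
    = ε * sqrtpstar p ^ finrank (ZMod p) V * ZMod.stdAddChar (g φ)

/-- The word `x ↦ a + b (f x + 1) + φ x`, a typical codeword of the code spanned by the constant
`1`, by `f + 1` and by the linear forms. -/
def bentWord (f : V → ZMod p) (a b : ZMod p) (φ : Dual (ZMod p) V) (x : V) : ZMod p :=
  a + b * (f x + 1) + φ x

variable {f : V → ZMod p} {ε : ℤ} {g : Dual (ZMod p) V → ZMod p} {k : ℕ}

lemma card_eq_pow_of_finrank_eq {n : ℕ} (hV : finrank (ZMod p) V = n) :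
    Fintype.card V = p ^ n := by
  rw [card_eq_pow_finrank (K := ZMod p), ZMod.card, hV]

namespace IsWeaklyRegularBent

lemma card_fiber (hp : Odd p) (hV : finrank (ZMod p) V = 2 * k + 1)
    (hf : IsWeaklyRegularBent f ε g) (φ : Dual (ZMod p) V) (c : ZMod p) :
    (#{x | f x - φ x = c} : ℤ) = p ^ (2 * k)
      + ε * qchar (ZMod p) (-1) ^ (k + 1) * p ^ k * qchar (ZMod p) (g φ - c) := by
  set χ := quadraticChar (ZMod p) with hχ
  have card_sum : ∑ c, (#{x | f x - φ x = c} : ℤ)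
      = ∑ c, ((p : ℤ) ^ (2 * k) + ε * (χ (-1) * p) ^ k * χ (c - g φ)) := by
    have sum_χ : ∑ c, χ (c - g φ) = 0 :=
      ((Equiv.subRight (g φ)).sum_comp χ).trans (quadraticChar_sum_zero (ringChar_zmod_ne_two hp))
    rw [sum_add_distrib, ← mul_sum, sum_χ, ← Nat.cast_sum,
      ← card_eq_sum_card_fiberwise (by simp), card_univ, card_eq_pow_of_finrank_eq hV]
    simp [pow_succ']
  have char_sum : ∑ c, ((#{x | f x - φ x = c} : ℤ) : ℂ) * ZMod.stdAddChar c
      = ∑ c, (((p : ℤ) ^ (2 * k) + ε * (χ (-1) * p) ^ k * χ (c - g φ) : ℤ) : ℂ)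
          * ZMod.stdAddChar c := by
    have sum_stdAddChar : ∑ c : ZMod p, (ZMod.stdAddChar c : ℂ) = 0 := by
      simpa using AddChar.sum_mulShift (1 : ZMod p) (ZMod.isPrimitive_stdAddChar p)
    calc ∑ c, ((#{x | f x - φ x = c} : ℤ) : ℂ) * ZMod.stdAddChar c
        = ∑ x, (ZMod.stdAddChar (f x - φ x) : ℂ) := by
          rw [← sum_fiberwise' univ (fun x => f x - φ x) fun c => (ZMod.stdAddChar c : ℂ)]
          simp
      _ = ε * (χ (-1) * p) ^ k * (sqrtpstar p * ZMod.stdAddChar (g φ)) := by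
          rw [hf φ, hV, pow_succ, pow_mul, sqrtpstar_sq hp, qchar_eq_quadraticChar]
          ring
      _ = _ := by
          rw [← sum_quadraticChar_sub_mul_stdAddChar hp]
          push_cast
          simp only [add_mul, sum_add_distrib, ← mul_sum, mul_assoc, sum_stdAddChar, mul_zero,
            zero_add, χ]
  have χ_neg : χ (c - g φ) = χ (-1) * χ (g φ - c) := by rw [← map_mul, neg_one_mul, neg_sub]
  have fiber := congrFun (eq_of_sum_mul_stdAddChar_eq card_sum char_sum) c
  rw [qchar_eq_quadraticChar, fiber, ← hχ, χ_neg]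
  ring

lemma dual_zero (hp : Odd p) (hV : finrank (ZMod p) V = 2 * k + 1)
    (hf : IsWeaklyRegularBent f ε g) (hf_even : ∀ x, f (-x) = f x) (hf_zero : f 0 = 0) :
    g 0 = 0 := by
  by_contra hg
  have card_eq : #{x | f x = g 0} = p ^ (2 * k) := by
    have := hf.card_fiber hp hV 0 (g 0)
    simp only [LinearMap.zero_apply, sub_zero, sub_self, qchar, if_true, mul_zero, add_zero] at this
    exact_mod_cast this
  have even_card : Even #{x | f x = g 0} := even_card_fiber_of_even
    (card_eq_pow_of_finrank_eq hV ▸ hp.pow) hf_even (hf_zero.trans_ne (Ne.symm hg))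
  exact Nat.not_even_iff_odd.2 hp.pow (card_eq ▸ even_card)

lemma hammingNorm_bentWord (hp : Odd p) (hV : finrank (ZMod p) V = 2 * k + 1)
    (hf : IsWeaklyRegularBent f ε g) (a : ZMod p) {b : ZMod p} (hb : b ≠ 0)
    (φ : Dual (ZMod p) V) :
    (hammingNorm (bentWord f a b φ) : ℤ) = p ^ (2 * k + 1) - p ^ (2 * k)
      - ε * qchar (ZMod p) (-1) ^ (k + 1) * p ^ k
        * qchar (ZMod p) (g (-(b⁻¹ • φ)) + (b⁻¹ * a + 1)) := by
  have factor (x : V) : bentWord f a b φ x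
      = b * (f x - (-(b⁻¹ • φ)) x - -(b⁻¹ * a + 1)) := by
    simp only [bentWord, LinearMap.neg_apply, LinearMap.smul_apply, smul_eq_mul]
    field_simp
    ring
  have card_zeros := hf.card_fiber hp hV (-(b⁻¹ • φ)) (-(b⁻¹ * a + 1))
  have card_add := hammingNorm_add_card_zeros (bentWord f a b φ)
  simp only [factor, mul_eq_zero, hb, false_or, sub_eq_zero (b := -(b⁻¹ * a + 1))] at card_add
  zify [card_eq_pow_of_finrank_eq hV] at card_add
  rw [card_zeros, sub_neg_eq_add] at card_add
  linear_combination card_add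

end IsWeaklyRegularBent

lemma le_hammingNorm_bentWord_zero (hV : finrank (ZMod p) V = 2 * k + 1) {a : ZMod p}
    {φ : Dual (ZMod p) V} (h : a ≠ 0 ∨ φ ≠ 0) :
    p ^ (2 * k + 1) ≤ hammingNorm (bentWord f a 0 φ) + p ^ (2 * k) := by
  have card_add := hammingNorm_add_card_zeros (bentWord f a 0 φ)
  rw [card_eq_pow_of_finrank_eq hV] at card_add
  rw [← card_add, add_le_add_iff_left]
  by_cases hφ : φ = 0
  · simp [bentWord, hφ, h.resolve_right (not_not.2 hφ)]
  · have card_zeros := card_dual_fiber_mul_card hφ (-a)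
    rw [card_eq_pow_of_finrank_eq hV, ZMod.card, pow_succ,
      Nat.mul_left_inj (Fact.out : p.Prime).ne_zero] at card_zeros
    simp [bentWord, ← card_zeros, add_eq_zero_iff_eq_neg']

lemma abs_qchar_le_one {F : Type*} [MonoidWithZero F] (a : F) : |qchar F a| ≤ 1 := by
  unfold qchar
  split_ifs <;> simp

lemma IsWeaklyRegularBent.le_hammingNorm_bentWord (hp : Odd p)
    (hV : finrank (ZMod p) V = 2 * k + 1) (hf : IsWeaklyRegularBent f ε g)
    (hε : |ε * qchar (ZMod p) (-1) ^ (k + 1)| ≤ 1) {a b : ZMod p} {φ : Dual (ZMod p) V}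
    (h : a ≠ 0 ∨ b ≠ 0 ∨ φ ≠ 0) :
    p ^ (2 * k + 1) ≤ hammingNorm (bentWord f a b φ) + p ^ (2 * k) + p ^ k := by
  rcases eq_or_ne b 0 with rfl | hb
  · have := le_hammingNorm_bentWord_zero (f := f) hV (a := a) (φ := φ) (by simpa using h)
    omega
  · have weight := hf.hammingNorm_bentWord hp hV a hb φ
    set u := qchar (ZMod p) (g (-(b⁻¹ • φ)) + (b⁻¹ * a + 1))
    have deviation_le : ε * qchar (ZMod p) (-1) ^ (k + 1) * p ^ k * u ≤ p ^ k := by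
      calc ε * qchar (ZMod p) (-1) ^ (k + 1) * p ^ k * u
          = ε * qchar (ZMod p) (-1) ^ (k + 1) * u * p ^ k := by ring
        _ ≤ 1 * p ^ k := by
          gcongr
          refine (le_abs_self _).trans ?_
          rw [abs_mul]
          exact mul_le_one₀ hε (abs_nonneg _) (abs_qchar_le_one _)
        _ = p ^ k := one_mul _
    zify
    linarith

end BentFunction

section SystematicCode

variable {ι F : Type*} [Fintype ι]

lemma isMinDist_iff [CommRing F] [DecidableEq F] (C : Set (ι → F)) (d : ℕ) :
    IsMinDist C d ↔ (∃ c ∈ C, c ≠ 0 ∧ hammingNorm c = d) ∧ ∀ c ∈ C, c ≠ 0 → d ≤ hammingNorm c := by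
  unfold IsMinDist
  convert Iff.rfl

section Ring

variable [CommRing F] {k : ℕ} (G : Fin k → ι → F)

lemma genCode_eq_range :
    genCode k G = Set.range fun v : Fin k → F => Sum.elim v fun x => ∑ j, v j * G j x :=
  Set.ext fun _ => exists_congr fun _ => eq_comm

lemma dualCode_genCode_eq_range :
    dualCode (genCode k G)
      = Set.range fun c : ι → F => Sum.elim (-fun j => ∑ x, c x * G j x) c := by
  have inner_eq (u : Fin k ⊕ ι → F) (v : Fin k → F) :
      ∑ i, u i * (Sum.elim v fun x => ∑ j, v j * G j x : Fin k ⊕ ι → F) i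
        = (fun j => u (.inl j) + ∑ x, u (.inr x) * G j x) ⬝ᵥ v := by
    simp only [Fintype.sum_sum_type, Sum.elim_inl, Sum.elim_inr, dotProduct, add_mul,
      Finset.sum_add_distrib, Finset.mul_sum, Finset.sum_mul]
    rw [Finset.sum_comm]
    congr! 3
    ring
  ext u
  calc u ∈ dualCode (genCode k G)
      ↔ ∀ v, (fun j => u (.inl j) + ∑ x, u (.inr x) * G j x) ⬝ᵥ v = 0 := by
        simp only [genCode_eq_range, dualCode, Set.mem_ofPred_eq, Set.forall_mem_range, inner_eq]
    _ ↔ -(fun j => ∑ x, u (.inr x) * G j x) = u ∘ .inl := by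
        rw [dotProduct_eq_zero_iff, funext_iff, funext_iff]
        exact forall_congr' fun j => by
          simp only [Pi.zero_apply, Pi.neg_apply, Function.comp_apply, add_eq_zero_iff_neg_eq']
    _ ↔ _ := by
        constructor
        · exact fun h => ⟨u ∘ .inr, Sum.elim_eq_iff.2 ⟨h, rfl⟩ |>.trans (Sum.elim_comp_inl_inr u)⟩
        · rintro ⟨c, rfl⟩
          rfl

lemma card_genCode : Nat.card (genCode k G) = Nat.card F ^ k := by
  rw [genCode_eq_range, Nat.card_range_of_injective fun v w h => (Sum.elim_eq_iff.1 h).1,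
    Nat.card_fun, Nat.card_fin]

lemma card_dualCode_genCode : Nat.card (dualCode (genCode k G)) = Nat.card F ^ Nat.card ι := by
  rw [dualCode_genCode_eq_range, Nat.card_range_of_injective fun c d h => (Sum.elim_eq_iff.1 h).2,
    Nat.card_fun]

lemma isMinDist_genCode_iff [DecidableEq F] (d : ℕ) :
    IsMinDist (genCode k G) d
      ↔ (∃ v ≠ 0, hammingNorm v + hammingNorm (fun x => ∑ j, v j * G j x) = d)
        ∧ ∀ v ≠ 0, d ≤ hammingNorm v + hammingNorm fun x => ∑ j, v j * G j x := by
  have encode_eq_zero (v : Fin k → F) :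
      (Sum.elim v fun x => ∑ j, v j * G j x : Fin k ⊕ ι → F) = 0 ↔ v = 0 := by
    constructor
    · exact fun h => funext fun j => congrFun h (.inl j)
    · rintro rfl
      simp [funext_iff]
  simp [isMinDist_iff, genCode_eq_range, encode_eq_zero, hammingNorm_sumElim]

lemma isMinDist_dualCode_genCode_iff [DecidableEq F] (d : ℕ) :
    IsMinDist (dualCode (genCode k G)) d
      ↔ (∃ c ≠ 0, hammingNorm (fun j => ∑ x, c x * G j x) + hammingNorm c = d)
        ∧ ∀ c ≠ 0, d ≤ hammingNorm (fun j => ∑ x, c x * G j x) + hammingNorm c := by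
  have encode_eq_zero (c : ι → F) :
      (Sum.elim (-fun j => ∑ x, c x * G j x) c : Fin k ⊕ ι → F) = 0 ↔ c = 0 := by
    constructor
    · exact fun h => funext fun x => congrFun h (.inr x)
    · rintro rfl
      simp [funext_iff]
  have hammingNorm_neg (v : Fin k → F) : hammingNorm (-v) = hammingNorm v := by
    simp [hammingNorm]
  simp [isMinDist_iff, dualCode_genCode_eq_range, encode_eq_zero, hammingNorm_sumElim,
    hammingNorm_neg]

end Ring

lemma isMinDist_dualCode_genCode_three [Field F] [DecidableEq F] {k : ℕ} {G : Fin k → ι → F}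
    (two_le : ∀ x, 2 ≤ hammingNorm (G · x)) {x₀ : ι} (eq_two : hammingNorm (G · x₀) = 2)
    (indep : ∀ x y, x ≠ y → LinearIndependent F ![(G · x), (G · y)]) :
    IsMinDist (dualCode (genCode k G)) 3 := by
  rw [isMinDist_dualCode_genCode_iff]
  constructor
  · have weight_single : hammingNorm (Pi.single x₀ 1 : ι → F) = 1 :=
      Finset.card_eq_one.2 ⟨x₀, by ext; simp [Pi.single_apply]⟩
    refine ⟨Pi.single x₀ 1, by simp, ?_⟩
    simp [weight_single, Pi.single_apply, eq_two]
  intro c hc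
  have weight_c_pos : 0 < hammingNorm c := hammingNorm_pos_iff.2 hc
  obtain weight_c | weight_c | weight_c :
      hammingNorm c = 1 ∨ hammingNorm c = 2 ∨ 3 ≤ hammingNorm c := by omega
  · obtain ⟨x, hx⟩ := Finset.card_eq_one.1 weight_c
    simp only [Finset.ext_iff, Finset.mem_filter_univ, Finset.mem_singleton] at hx
    have combination : (fun j => ∑ y, c y * G j y) = c x • (G · x) := by
      funext j
      exact Fintype.sum_eq_single x fun y hy => by simp [not_not.1 ((hx y).not.2 hy)]
    have := two_le x
    rw [combination, hammingNorm_smul (fun _ => IsSMulRegular.of_ne_zero ((hx x).2 rfl))]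
    omega
  · obtain ⟨x, y, hxy, hsupp⟩ := Finset.card_eq_two.1 weight_c
    simp only [Finset.ext_iff, Finset.mem_filter_univ, Finset.mem_insert, Finset.mem_singleton]
      at hsupp
    have combination : (fun j => ∑ z, c z * G j z) = c x • (G · x) + c y • (G · y) := by
      funext j
      exact Fintype.sum_eq_add x y hxy fun z hz => by
        simp [not_not.1 ((hsupp z).not.2 (not_or.2 hz))]
    have combination_ne_zero : (fun j => ∑ z, c z * G j z) ≠ 0 := fun h =>
      (hsupp x).2 (.inl rfl) (LinearIndependent.pair_iff.1 (indep x y hxy) _ _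
        (combination.symm.trans h)).1
    have := hammingNorm_pos_iff.2 combination_ne_zero
    omega
  · omega

end SystematicCode

section BentCode

open Module

variable {p e : ℕ} [Fact p.Prime] {V : Type*} [AddCommGroup V] [Module (ZMod p) V]

/-- The generator matrix with rows `1`, `f + 1` and the linear forms `ℓ 0, …, ℓ (e - 1)`: the
matrix `G₂` of `f`, for an arbitrary family of linear forms in place of the trace forms
`x ↦ Tr (β ^ i * x)`. -/
def bentMatrix (f : V → ZMod p) (ℓ : Fin e → Dual (ZMod p) V) : Fin (e + 2) → V → ZMod p :=
  Fin.cons 1 (Fin.cons (f + 1) fun i => ℓ i)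

variable {f : V → ZMod p}

lemma sum_mul_bentMatrix (ℓ : Fin e → Dual (ZMod p) V) (a b : ZMod p) (c : Fin e → ZMod p) :
    (fun x => ∑ j, (Fin.cons a (Fin.cons b c : Fin (e + 1) → ZMod p) : Fin (e + 2) → ZMod p) j
      * bentMatrix f ℓ j x) = bentWord f a b (∑ i, c i • ℓ i) := by
  funext x
  simp [Fin.sum_univ_succ, bentMatrix, bentWord, add_assoc]

lemma hammingNorm_bentMatrix_col (ℓ : Fin e → Dual (ZMod p) V) (x : V) :
    hammingNorm (bentMatrix f ℓ · x)
      = 1 + ((if f x + 1 = 0 then 0 else 1) + hammingNorm (ℓ · x)) := by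
  have col_eq : (bentMatrix f ℓ · x)
      = Fin.cons 1 (Fin.cons (f x + 1) (ℓ · x : Fin e → ZMod p) : Fin (e + 1) → ZMod p) := by
    funext j
    refine Fin.cases rfl (Fin.cases rfl fun i => rfl) j
  rw [col_eq, hammingNorm_cons, hammingNorm_cons, if_neg one_ne_zero]

lemma linearIndependent_bentMatrix_col_pair {ℓ : Fin e → Dual (ZMod p) V}
    (hℓ : Function.Injective fun x i => ℓ i x) {x y : V} (hxy : x ≠ y) :
    LinearIndependent (ZMod p) ![(bentMatrix f ℓ · x), (bentMatrix f ℓ · y)] := by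
  rw [LinearIndependent.pair_iff]
  intro s t h
  have ones : s + t = 0 := by simpa [bentMatrix] using congrFun h 0
  have forms (i : Fin e) : s * ℓ i x + t * ℓ i y = 0 := by
    simpa [bentMatrix] using congrFun h i.succ.succ
  have s_eq_zero : s = 0 := by
    by_contra hs
    refine hxy (hℓ (funext fun i => mul_left_cancel₀ hs ?_))
    linear_combination forms i - ℓ i y * ones
  exact ⟨s_eq_zero, by simpa [s_eq_zero] using ones⟩

lemma finCons_ne_zero_iff {n : ℕ} {M : Type*} [Zero M] {a : M} {v : Fin n → M} :
    (Fin.cons a v : Fin (n + 1) → M) ≠ 0 ↔ a ≠ 0 ∨ v ≠ 0 :=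
  Matrix.cons_nonzero_iff

/-- The Hamming weight of the message that `bentMatrix f ℓ` encodes as `bentWord f a b φ`. -/
def messageWeight (ℓ : Basis (Fin e) (ZMod p) (Dual (ZMod p) V)) (a b : ZMod p)
    (φ : Dual (ZMod p) V) : ℕ :=
  hammingNorm (Fin.cons a (Fin.cons b (ℓ.equivFun φ) : Fin (e + 1) → ZMod p) :
    Fin (e + 2) → ZMod p)

variable (ℓ : Basis (Fin e) (ZMod p) (Dual (ZMod p) V)) {a b : ZMod p} {φ : Dual (ZMod p) V}

lemma messageWeight_eq : messageWeight ℓ a b φ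
    = (if a = 0 then 0 else 1) + ((if b = 0 then 0 else 1) + hammingNorm (ℓ.equivFun φ)) := by
  rw [messageWeight, hammingNorm_cons, hammingNorm_cons]

lemma one_le_messageWeight (h : a ≠ 0 ∨ b ≠ 0 ∨ φ ≠ 0) : 1 ≤ messageWeight ℓ a b φ := by
  rwa [Nat.one_le_iff_ne_zero, messageWeight, hammingNorm_ne_zero_iff, finCons_ne_zero_iff,
    finCons_ne_zero_iff, LinearEquiv.map_ne_zero_iff]

lemma two_le_messageWeight (hb : b ≠ 0) (h : a ≠ 0 ∨ φ ≠ 0) : 2 ≤ messageWeight ℓ a b φ := by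
  rw [messageWeight_eq, if_neg hb]
  rcases h with ha | hφ
  · rw [if_neg ha]
    omega
  · have := hammingNorm_pos_iff.2 (ℓ.equivFun.map_ne_zero_iff.2 hφ)
    omega

variable [Fintype V]

lemma isMinDist_dualCode_bentMatrix (hf_zero : f 0 = 0) {ℓ : Fin e → Dual (ZMod p) V}
    (hℓ : Function.Injective fun x i => ℓ i x) :
    IsMinDist (dualCode (genCode (e + 2) (bentMatrix f ℓ))) 3 := by
  have form_weight_pos {x : V} (hx : x ≠ 0) : 0 < hammingNorm (ℓ · x) :=
    hammingNorm_pos_iff.2 fun h => hx (hℓ (by simpa [funext_iff] using h))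
  have form_weight_zero : hammingNorm (ℓ · 0) = 0 :=
    hammingNorm_eq_zero.2 (funext fun i => map_zero (ℓ i))
  have col_weight_zero : hammingNorm (bentMatrix f ℓ · 0) = 2 := by
    rw [hammingNorm_bentMatrix_col, form_weight_zero, hf_zero, zero_add, if_neg one_ne_zero]
  refine isMinDist_dualCode_genCode_three (fun x => ?_) col_weight_zero
    fun x y hxy => linearIndependent_bentMatrix_col_pair hℓ hxy
  rcases eq_or_ne x 0 with rfl | hx
  · exact col_weight_zero.ge
  · have := form_weight_pos hx
    rw [hammingNorm_bentMatrix_col]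
    omega

section MinDist

variable {ε : ℤ} {g : Dual (ZMod p) V → ZMod p} {k : ℕ}

lemma isMinDist_bentMatrix_iff (d : ℕ) :
    IsMinDist (genCode (e + 2) (bentMatrix f ℓ)) d
      ↔ (∃ a b φ, (a ≠ 0 ∨ b ≠ 0 ∨ φ ≠ 0)
          ∧ messageWeight ℓ a b φ + hammingNorm (bentWord f a b φ) = d)
        ∧ ∀ a b φ, (a ≠ 0 ∨ b ≠ 0 ∨ φ ≠ 0) →
          d ≤ messageWeight ℓ a b φ + hammingNorm (bentWord f a b φ) := by
  rw [isMinDist_genCode_iff]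
  simp only [Fin.exists_fin_succ_pi, Fin.forall_fin_succ_pi, sum_mul_bentMatrix,
    finCons_ne_zero_iff, ℓ.equivFun.surjective.exists, ℓ.equivFun.surjective.forall,
    ℓ.sum_equivFun, messageWeight, LinearEquiv.map_ne_zero_iff]

namespace IsWeaklyRegularBent

lemma hammingNorm_bentWord_const (hp : Odd p) (hV : finrank (ZMod p) V = 2 * k + 1)
    (hf : IsWeaklyRegularBent f ε g) (hg_zero : g 0 = 0) (a : ZMod p) {b : ZMod p} (hb : b ≠ 0) :
    (hammingNorm (bentWord f a b 0) : ℤ) = p ^ (2 * k + 1) - p ^ (2 * k)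
      - ε * qchar (ZMod p) (-1) ^ (k + 1) * p ^ k * qchar (ZMod p) (b⁻¹ * a + 1) := by
  simpa only [smul_zero, neg_zero, hg_zero, zero_add] using hf.hammingNorm_bentWord hp hV a hb 0

lemma isMinDist_bentMatrix_of_eq_one (hp : Odd p) (hV : finrank (ZMod p) V = 2 * k + 1)
    (hf : IsWeaklyRegularBent f ε g) (hg_zero : g 0 = 0)
    (hε : ε * qchar (ZMod p) (-1) ^ (k + 1) = 1) :
    IsMinDist (genCode (e + 2) (bentMatrix f ℓ)) (p ^ (2 * k + 1) - p ^ (2 * k) - p ^ k + 1) := by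
  have extremal_weight :
      hammingNorm (bentWord f 0 1 0) + p ^ (2 * k) + p ^ k = p ^ (2 * k + 1) := by
    have := hf.hammingNorm_bentWord_const hp hV hg_zero 0 one_ne_zero
    rw [hε, mul_zero, zero_add, qchar_eq_quadraticChar, map_one] at this
    zify
    linarith
  rw [isMinDist_bentMatrix_iff]
  refine ⟨⟨0, 1, 0, by simp, ?_⟩, fun a b φ h => ?_⟩
  · simp only [messageWeight_eq, if_true, one_ne_zero, if_false, map_zero, hammingNorm_zero]
    omega
  · have word_weight := hf.le_hammingNorm_bentWord hp hV (by simp [hε]) h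
    have message_weight := one_le_messageWeight ℓ h
    omega

lemma le_weight_of_eq_neg_one (hp : Odd p) (hV : finrank (ZMod p) V = 2 * k + 1)
    (hf : IsWeaklyRegularBent f ε g) (hg_zero : g 0 = 0)
    (hε : ε * qchar (ZMod p) (-1) ^ (k + 1) = -1)
    (h : a ≠ 0 ∨ b ≠ 0 ∨ φ ≠ 0) :
    p ^ (2 * k + 1) + 2
      ≤ messageWeight ℓ a b φ + hammingNorm (bentWord f a b φ) + p ^ (2 * k) + p ^ k := by
  have one_le_pow : 1 ≤ p ^ k := Nat.one_le_pow _ _ (Fact.out : p.Prime).pos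
  by_cases hb : b = 0
  · have word_weight := le_hammingNorm_bentWord_zero (f := f) hV (a := a) (φ := φ)
      (by simpa [hb] using h)
    have message_weight := one_le_messageWeight ℓ h
    subst hb
    omega
  by_cases haφ : a = 0 ∧ φ = 0
  · obtain ⟨rfl, rfl⟩ := haφ
    have word_weight := hf.hammingNorm_bentWord_const hp hV hg_zero 0 hb
    rw [hε, mul_zero, zero_add, qchar_eq_quadraticChar, map_one] at word_weight
    have message_weight := one_le_messageWeight ℓ h
    zify at one_le_pow message_weight ⊢
    linarith
  · have word_weight := hf.le_hammingNorm_bentWord hp hV (by simp [hε]) h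
    have message_weight := two_le_messageWeight ℓ hb (not_and_or.1 haφ)
    omega

lemma isMinDist_bentMatrix_of_eq_neg_one (hp : Odd p) (hV : finrank (ZMod p) V = 2 * k + 1)
    (hf : IsWeaklyRegularBent f ε g) (hg_zero : g 0 = 0)
    (hε : ε * qchar (ZMod p) (-1) ^ (k + 1) = -1) :
    IsMinDist (genCode (e + 2) (bentMatrix f ℓ)) (p ^ (2 * k + 1) - p ^ (2 * k) - p ^ k + 2) := by
  obtain ⟨t, ht⟩ := quadraticChar_exists_neg_one (ringChar_zmod_ne_two hp)
  have t_ne_one : t ≠ 1 := by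
    rintro rfl
    simp at ht
  have extremal_weight :
      hammingNorm (bentWord f (t - 1) 1 0) + p ^ (2 * k) + p ^ k = p ^ (2 * k + 1) := by
    have := hf.hammingNorm_bentWord_const hp hV hg_zero (t - 1) one_ne_zero
    rw [hε, inv_one, one_mul, sub_add_cancel, qchar_eq_quadraticChar, ht] at this
    zify
    linarith
  rw [isMinDist_bentMatrix_iff]
  refine ⟨⟨t - 1, 1, 0, by simp, ?_⟩, fun a b φ h => ?_⟩
  · simp only [messageWeight_eq, sub_eq_zero, t_ne_one, one_ne_zero, if_false, map_zero,
      hammingNorm_zero]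
    omega
  · have := hf.le_weight_of_eq_neg_one ℓ hp hV hg_zero hε h
    omega

end IsWeaklyRegularBent

end MinDist

end BentCode

section General

open Module

variable {p e : ℕ} [Fact p.Prime] {V : Type*} [AddCommGroup V] [Module (ZMod p) V] [Fintype V]

theorem stmt18_general (hp : Odd p) (he : Odd e) {f : V → ZMod p} {ε : ℤ}
    {g : Dual (ZMod p) V → ZMod p} (hf : IsWeaklyRegularBent f ε g)
    (hf_even : ∀ x, f (-x) = f x) (hf_zero : f 0 = 0)
    (ℓ : Basis (Fin e) (ZMod p) (Dual (ZMod p) V)) :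
    Fintype.card (Fin (e + 2) ⊕ V) = p ^ e + e + 2 ∧
    Nat.card (genCode (e + 2) (bentMatrix f ℓ)) = p ^ (e + 2) ∧
    (ε * qchar (ZMod p) (-1) ^ ((e + 1) / 2) = 1 →
      IsMinDist (genCode (e + 2) (bentMatrix f ℓ))
        (p ^ e - p ^ (e - 1) - p ^ ((e - 1) / 2) + 1)) ∧
    (ε * qchar (ZMod p) (-1) ^ ((e + 1) / 2) = -1 →
      IsMinDist (genCode (e + 2) (bentMatrix f ℓ))
        (p ^ e - p ^ (e - 1) - p ^ ((e - 1) / 2) + 2)) ∧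
    Nat.card (dualCode (genCode (e + 2) (bentMatrix f ℓ))) = p ^ (p ^ e) ∧
    IsMinDist (dualCode (genCode (e + 2) (bentMatrix f ℓ))) 3 := by
  have finrank_eq : finrank (ZMod p) V = e := by
    rw [← Subspace.dual_finrank_eq, finrank_eq_card_basis ℓ, Fintype.card_fin]
  have card_eq := card_eq_pow_of_finrank_eq finrank_eq
  obtain ⟨k, rfl⟩ := he
  have hg_zero := hf.dual_zero hp finrank_eq hf_even hf_zero
  have separating : Function.Injective fun x i => ℓ i x := fun x y h =>
    Module.eval_apply_injective _ (ℓ.ext (congrFun h))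
  rw [show (2 * k + 1 + 1) / 2 = k + 1 by omega, Nat.add_sub_cancel,
    Nat.mul_div_cancel_left k two_pos]
  refine ⟨?_, ?_, fun hε => hf.isMinDist_bentMatrix_of_eq_one ℓ hp finrank_eq hg_zero hε,
    fun hε => hf.isMinDist_bentMatrix_of_eq_neg_one ℓ hp finrank_eq hg_zero hε, ?_,
    isMinDist_dualCode_bentMatrix hf_zero separating⟩
  · rw [Fintype.card_sum, Fintype.card_fin, card_eq]
    ring
  · rw [card_genCode, Nat.card_zmod]
  · rw [card_dualCode_genCode, Nat.card_zmod, Nat.card_eq_fintype_card, card_eq]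

end General

section TraceForm

open Module

/-- The identification of `K` with its linear dual through the trace form, under which `y`
corresponds to `x ↦ Tr (y * x)`. -/
def traceDual (F K : Type*) [Field F] [Field K] [Algebra F K] [FiniteDimensional F K]
    [Algebra.IsSeparable F K] : K ≃ₗ[F] Dual F K :=
  (Algebra.traceForm F K).toDual (traceForm_nondegenerate F K)

lemma traceDual_apply {F K : Type*} [Field F] [Field K] [Algebra F K] [FiniteDimensional F K]
    [Algebra.IsSeparable F K] (y x : K) : traceDual F K y x = Algebra.trace F K (y * x) := by
  rw [traceDual, LinearMap.BilinForm.toDual_def, Algebra.traceForm_apply]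

lemma exists_basis_pow_of_forall_eq_pow {F K : Type*} [Field F] [Field K] [Algebra F K]
    [FiniteDimensional F K] {e : ℕ} (hK : finrank F K = e) {β : K}
    (hβ : ∀ y : K, y ≠ 0 → ∃ k : ℕ, β ^ k = y) :
    ∃ b : Basis (Fin e) F K, ∀ i, b i = β ^ (i : ℕ) := by
  have adjoin_eq_top : Algebra.adjoin F {β} = ⊤ := by
    refine eq_top_iff.2 fun y _ => ?_
    rcases eq_or_ne y 0 with rfl | hy
    · exact zero_mem _
    · obtain ⟨k, rfl⟩ := hβ y hy
      exact pow_mem (Algebra.self_mem_adjoin_singleton F β) k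
  let pb := PowerBasis.ofAdjoinEqTop (Algebra.IsIntegral.isIntegral β) adjoin_eq_top
  have dim_eq : pb.dim = e := pb.finrank.symm.trans hK
  refine ⟨pb.basis.reindex (finCongr dim_eq), fun i => ?_⟩
  rw [Basis.reindex_apply, PowerBasis.basis_eq_pow, PowerBasis.ofAdjoinEqTop_gen]
  rfl

variable {p e : ℕ} [Fact p.Prime] {K : Type*} [Field K] [Fintype K] [Algebra (ZMod p) K]

lemma finrank_eq_of_card_eq_pow (hK : Fintype.card K = p ^ e) : finrank (ZMod p) K = e := by
  rw [card_eq_pow_finrank (K := ZMod p), ZMod.card] at hK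
  exact Nat.pow_right_injective (Fact.out : p.Prime).two_le hK

namespace IsRF

variable {f : K → ZMod p} {ε : ℤ} {fstar : K → ZMod p}

lemma isWeaklyRegularBent (h : IsRF p e K f ε fstar) (hK : finrank (ZMod p) K = e) :
    IsWeaklyRegularBent f ε (fstar ∘ (traceDual (ZMod p) K).symm) := by
  intro φ
  obtain ⟨y, rfl⟩ := (traceDual (ZMod p) K).surjective φ
  simpa only [traceDual_apply, ← zetapc_pow_val, Function.comp_apply,
    LinearEquiv.symm_apply_apply, hK] using h.walsh y

lemma map_neg (h : IsRF p e K f ε fstar) (x : K) : f (-x) = f x := by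
  obtain ⟨n, n_even, -, -, homogeneous⟩ := h.hom
  simpa [n_even.neg_one_pow] using homogeneous (-1) (neg_ne_zero.2 one_ne_zero) x

end IsRF

end TraceForm

theorem stmt18 (p e : ℕ) [Fact p.Prime] (hodd : Odd p) (he : 3 ≤ e) (heodd : Odd e)
    (Fq : Type) [Field Fq] [Fintype Fq] [Algebra (ZMod p) Fq]
    (hcq : Fintype.card Fq = p ^ e)
    (f : Fq → ZMod p) (ε : ℤ) (fstar : Fq → ZMod p) (hRF : IsRF p e Fq f ε fstar)
    -- `β` is a primitive element of `F_q`
    (β : Fq) (hβ : ∀ y : Fq, y ≠ 0 → ∃ k : ℕ, β ^ k = y)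
    -- the matrix `G₂`
    (G2 : Fin (e + 2) → Fq → ZMod p)
    (hG2 : ∀ k d, G2 k d =
      if (k : ℕ) = 0 then 1
      else if (k : ℕ) = 1 then f d + 1
      else Algebra.trace (ZMod p) Fq (β ^ ((k : ℕ) - 2) * d))
    (C' : Set ((Fin (e + 2) ⊕ Fq) → ZMod p)) (hC' : C' = genCode (e + 2) G2) :
    -- length `p^e + e + 2`
    Fintype.card (Fin (e + 2) ⊕ Fq) = p ^ e + e + 2 ∧
    -- dimension `e + 2`
    Nat.card C' = p ^ (e + 2) ∧
    -- minimum distance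
    (ε * qchar (ZMod p) (-1) ^ ((e + 1) / 2) = 1 →
      IsMinDist C' (p ^ e - p ^ (e - 1) - p ^ ((e - 1) / 2) + 1)) ∧
    (ε * qchar (ZMod p) (-1) ^ ((e + 1) / 2) = -1 →
      IsMinDist C' (p ^ e - p ^ (e - 1) - p ^ ((e - 1) / 2) + 2)) ∧
    -- the dual has dimension `p^e` and minimum distance `3`
    Nat.card (dualCode C') = p ^ (p ^ e) ∧
    IsMinDist (dualCode C') 3 := by
  have finrank_eq := finrank_eq_of_card_eq_pow hcq
  obtain ⟨b, b_eq_pow⟩ := exists_basis_pow_of_forall_eq_pow finrank_eq hβ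
  let ℓ := b.map (traceDual (ZMod p) Fq)
  have G2_eq : G2 = bentMatrix f ℓ := by
    funext i x
    refine Fin.cases ?_ (Fin.cases ?_ fun i => ?_) i <;>
      simp [hG2, bentMatrix, ℓ, b_eq_pow, traceDual_apply]
  rw [hC', G2_eq]
  exact stmt18_general hodd heodd (hRF.isWeaklyRegularBent finrank_eq) hRF.map_neg hRF.map_zero ℓ
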